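/- If λ ≠ 0, then the joint kernel 𝔩 = ⋂_{i=1}^n ker c_λ(A)_i consists exactly of the constant tuples with entry in the kernel of A_1 + ⋯ + A_n + λ·id_V; that is, the diagonal map v ↦ (v, v, …, v) is a K-linear isomorphism from ker(A_1 + ⋯ + A_n + λ·id_V) onto 𝔩. -/

import Mathlib

/-! Dettweiler–Reiter convolution and middle convolution, in linear-algebra form.
`V^n` is modelled as `Fin n → V`. -/

/-- The Dettweiler–Reiter convolution endomorphism `c_λ(A)_i` of `V^n`, defined by
`(c_λ(A)_i w)_i = A_1 w_1 + ⋯ + A_n w_n + λ w_i` and `(c_λ(A)_i w)_k = 0` for `k ≠ i`. -/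
noncomputable def cDR {K : Type*} [Field K] {V : Type*} [AddCommGroup V] [Module K V]
    {n : ℕ} (lam : K) (A : Fin n → Module.End K V) (i : Fin n) :
    Module.End K (Fin n → V) :=
  (LinearMap.single K (fun _ : Fin n => V) i).comp
    ((∑ j, (A j).comp (LinearMap.proj j)) + lam • LinearMap.proj i)

/-- The subspace `𝔨 = {w ∈ V^n : A_i w_i = 0 for all i}`. -/
def kSub {K : Type*} [Field K] {V : Type*} [AddCommGroup V] [Module K V]
    {n : ℕ} (A : Fin n → Module.End K V) : Submodule K (Fin n → V) :=
  ⨅ i, LinearMap.ker ((A i).comp (LinearMap.proj i))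

/-- The subspace `𝔩 = ⋂_{i=1}^n ker c_λ(A)_i`. -/
noncomputable def lSub {K : Type*} [Field K] {V : Type*} [AddCommGroup V] [Module K V]
    {n : ℕ} (lam : K) (A : Fin n → Module.End K V) : Submodule K (Fin n → V) :=
  ⨅ i, LinearMap.ker (cDR lam A i)

/-- The underlying space `V^n/(𝔨 + 𝔩)` of the middle convolution `mc_λ(V; A)`. -/
noncomputable abbrev mcSpace {K : Type*} [Field K] {V : Type*} [AddCommGroup V] [Module K V]
    {n : ℕ} (lam : K) (A : Fin n → Module.End K V) :=
  (Fin n → V) ⧸ (kSub A ⊔ lSub lam A)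

/-- `e` is the endomorphism `mc_λ(A)_i` of `V^n/(𝔨 + 𝔩)` induced by `c_λ(A)_i`,
characterised by `e ∘ mkQ = mkQ ∘ c_λ(A)_i`. -/
noncomputable def IsInducedEnd {K : Type*} [Field K] {V : Type*} [AddCommGroup V] [Module K V]
    {n : ℕ} (lam : K) (A : Fin n → Module.End K V) (i : Fin n)
    (e : Module.End K (mcSpace lam A)) : Prop :=
  e.comp (kSub A ⊔ lSub lam A).mkQ = (kSub A ⊔ lSub lam A).mkQ.comp (cDR lam A i)

/-! Membership of `w` in `𝔩` says `λ w_i = -(A_1 w_1 + ⋯ + A_n w_n)` for every `i`. The right-hand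
side does not depend on `i`, so for `λ ≠ 0` the tuple `w` is constant; on constant tuples the
equations all reduce to `(A_1 + ⋯ + A_n + λ) v = 0`. -/

section

variable {K : Type*} [Field K] {V : Type*} [AddCommGroup V] [Module K V] {n : ℕ}

theorem cDR_apply (lam : K) (A : Fin n → Module.End K V) (i : Fin n) (w : Fin n → V) :
    cDR lam A i w = Pi.single i ((∑ j, A j (w j)) + lam • w i) := by
  simp [cDR]

theorem mem_lSub_iff {lam : K} {A : Fin n → Module.End K V} {w : Fin n → V} :
    w ∈ lSub lam A ↔ ∀ i, (∑ j, A j (w j)) + lam • w i = 0 := by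
  simp only [lSub, Submodule.mem_iInf, LinearMap.mem_ker, cDR_apply, Pi.single_eq_zero_iff]

theorem lSub_le_range_diagonal {lam : K} (hlam : lam ≠ 0) (A : Fin n → Module.End K V) :
    lSub lam A ≤ LinearMap.range (LinearMap.pi fun _ : Fin n => (LinearMap.id : V →ₗ[K] V)) := by
  intro w hw
  refine ⟨lam⁻¹ • -∑ j, A j (w j), funext fun i => ?_⟩
  have hi : -∑ j, A j (w j) = lam • w i := neg_eq_of_add_eq_zero_right (mem_lSub_iff.mp hw i)
  exact (inv_smul_eq_iff₀ hlam).mpr hi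

theorem comap_diagonal_lSub [NeZero n] (lam : K) (A : Fin n → Module.End K V) :
    (lSub lam A).comap (LinearMap.pi fun _ : Fin n => (LinearMap.id : V →ₗ[K] V)) =
      LinearMap.ker ((∑ i, A i) + lam • (1 : Module.End K V)) := by
  ext v
  simp [mem_lSub_iff]

theorem lSub_eq_diagonal_of_ne_zero_general
    (hn : 1 ≤ n) (A : Fin n → Module.End K V) (lam : K) (hlam : lam ≠ 0) :
    Function.Injective (LinearMap.pi fun _ : Fin n => (LinearMap.id : V →ₗ[K] V)) ∧
    Submodule.map (LinearMap.pi fun _ : Fin n => (LinearMap.id : V →ₗ[K] V))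
        (LinearMap.ker ((∑ i, A i) + lam • (1 : Module.End K V))) =
      lSub lam A := by
  have : NeZero n := NeZero.of_pos hn
  refine ⟨Function.const_injective, ?_⟩
  rw [← comap_diagonal_lSub, Submodule.map_comap_eq_self (lSub_le_range_diagonal hlam A)]

end

/-- If `λ ≠ 0`, the joint kernel `𝔩 = ⋂ ker c_λ(A)_i` consists exactly of
the constant tuples with entry in `ker(A_1 + ⋯ + A_n + λ·id_V)`; i.e. the diagonal map
`v ↦ (v, …, v)` is a `K`-linear isomorphism from `ker(A_1 + ⋯ + A_n + λ·id_V)` onto `𝔩`. -/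
theorem lSub_eq_diagonal_of_ne_zero
    {K : Type*} [Field K] {V : Type*} [AddCommGroup V] [Module K V] [FiniteDimensional K V]
    {n : ℕ} (hn : 1 ≤ n) (A : Fin n → Module.End K V) (lam : K) (hlam : lam ≠ 0) :
    Function.Injective (LinearMap.pi fun _ : Fin n => (LinearMap.id : V →ₗ[K] V)) ∧
    Submodule.map (LinearMap.pi fun _ : Fin n => (LinearMap.id : V →ₗ[K] V))
        (LinearMap.ker ((∑ i, A i) + lam • (1 : Module.End K V))) =
      lSub lam A :=
  lSub_eq_diagonal_of_ne_zero_general hn A lam hlam
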